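/- For any initial generalized decorated metric l₀ ∈ ℝ^E, there exists a unique differentiable curve l : [0,∞) → ℝ^E with l(0) = l₀ and l'(t) = K̃(l(t)) for all t ≥ 0; that is, the extended combinatorial Ricci flow has a unique solution existing for all time. -/

import Mathlib

noncomputable section

open Real Set Filter

/-- The generalized Euclidean triangle angle `aᵢ(x)` opposite the side of length `x i`,
for a generalized triangle with (positive) side lengths `x 0, x 1, x 2`:
it is `π` if `x i ≥ x j + x k`, `0` if some other side is at least the sum of the
remaining two, and otherwise the usual Euclidean angle `arccos((xⱼ²+x_k²−xᵢ²)/(2xⱼx_k))`. -/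
noncomputable def genAngle (x : Fin 3 → ℝ) (i : Fin 3) : ℝ :=
  if x (i + 1) + x (i + 2) ≤ x i then Real.pi
  else if x i + x (i + 2) ≤ x (i + 1) ∨ x i + x (i + 1) ≤ x (i + 2) then 0
  else Real.arccos
    ((x (i + 1) ^ 2 + x (i + 2) ^ 2 - x i ^ 2) / (2 * x (i + 1) * x (i + 2)))

/-- The three side lengths `e^{(l₁₂+l₃₄)/2}, e^{(l₁₃+l₂₄)/2}, e^{(l₁₄+l₂₃)/2}` of the
generalized Euclidean triangle associated to a length vector `l ∈ ℝ⁶`.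
Edge indices: `0 ↔ {1,2}, 1 ↔ {1,3}, 2 ↔ {1,4}, 3 ↔ {2,3}, 4 ↔ {2,4}, 5 ↔ {3,4}`,
so opposite pairs of edges are `(0,5), (1,4), (2,3)`. -/
noncomputable def triSides (l : Fin 6 → ℝ) (k : Fin 3) : ℝ :=
  if k.val = 0 then Real.exp ((l 0 + l 5) / 2)
  else if k.val = 1 then Real.exp ((l 1 + l 4) / 2)
  else Real.exp ((l 2 + l 3) / 2)

/-- The quad (pair of opposite edges) containing the edge `p`. -/
def quadIndex (p : Fin 6) : Fin 3 :=
  if p.val = 0 ∨ p.val = 5 then 0 else if p.val = 1 ∨ p.val = 4 then 1 else 2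

/-- The extended dihedral angle `α_p(l)` of the generalized decorated tetrahedron with
length vector `l ∈ ℝ⁶` at the edge `p`. -/
noncomputable def dihedral (l : Fin 6 → ℝ) (p : Fin 6) : ℝ :=
  genAngle (triSides l) (quadIndex p)

/-- The edge index in `Fin 6` of the edge `{i,j}` of the tetrahedron on vertices `Fin 4`
(junk value for `i = j`). -/
def edgeOf (i j : Fin 4) : Fin 6 :=
  if (i.val = 0 ∧ j.val = 1) ∨ (i.val = 1 ∧ j.val = 0) then 0
  else if (i.val = 0 ∧ j.val = 2) ∨ (i.val = 2 ∧ j.val = 0) then 1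
  else if (i.val = 0 ∧ j.val = 3) ∨ (i.val = 3 ∧ j.val = 0) then 2
  else if (i.val = 1 ∧ j.val = 2) ∨ (i.val = 2 ∧ j.val = 1) then 3
  else if (i.val = 1 ∧ j.val = 3) ∨ (i.val = 3 ∧ j.val = 1) then 4
  else 5

/-- The two endpoints of the edge `p` of the tetrahedron. -/
def endPts (p : Fin 6) : Fin 4 × Fin 4 :=
  if p.val = 0 then (0, 1) else if p.val = 1 then (0, 2) else if p.val = 2 then (0, 3)
  else if p.val = 3 then (1, 2) else if p.val = 4 then (1, 3) else (2, 3)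

/-- The Lobachevsky function `Λ(x) = −∫₀ˣ ln|2 sin t| dt`. -/
noncomputable def lob (x : ℝ) : ℝ := -∫ t in (0:ℝ)..x, Real.log |2 * Real.sin t|

/-- The volume of the generalized decorated tetrahedron with length vector `l`. -/
noncomputable def vol6 (l : Fin 6 → ℝ) : ℝ := (1 / 2 : ℝ) * ∑ p : Fin 6, lob (dihedral l p)

/-- The co-volume function `cov(l) = 2 vol(l) + Σ α_p(l) l_p` on `ℝ⁶`. -/
noncomputable def cov6 (l : Fin 6 → ℝ) : ℝ := 2 * vol6 l + ∑ p : Fin 6, dihedral l p * l p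

/-- `𝓛 ⊂ ℝ⁶`: length vectors of genuine decorated ideal hyperbolic tetrahedra, i.e. those
whose associated generalized Euclidean triangle satisfies the strict triangle inequalities. -/
def Ldom : Set (Fin 6 → ℝ) :=
  {l | ∀ i : Fin 3, triSides l i < triSides l (i + 1) + triSides l (i + 2)}

/-- The action of `w ∈ ℝ⁴` on `l ∈ ℝ⁶`: `(w + l)_{ij} = l_{ij} + wᵢ + wⱼ`. -/
def act (w : Fin 4 → ℝ) (l : Fin 6 → ℝ) : Fin 6 → ℝ :=
  fun p => l p + w (endPts p).1 + w (endPts p).2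

/-- `ℝ̂⁴ = {w + 0 : w ∈ ℝ⁴} ⊂ ℝ⁶`. -/
def hatR4 : Set (Fin 6 → ℝ) := {x | ∃ w : Fin 4 → ℝ, x = act w 0}

/-- `i, j, k, h` are pairwise distinct, i.e. `{i,j,k,h} = {1,2,3,4}`. -/
def Distinct4 (i j k h : Fin 4) : Prop :=
  i ≠ j ∧ i ≠ k ∧ i ≠ h ∧ j ≠ k ∧ j ≠ h ∧ k ≠ h

variable {T E : Type*}

/-- The length vector in `ℝ⁶` induced on the tetrahedron `σ` by a metric `l : E → ℝ`. -/
def pullback (glue : T → Fin 6 → E) (l : E → ℝ) (σ : T) : Fin 6 → ℝ :=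
  fun p => l (glue σ p)

/-- The generalized Ricci curvature `K̃_e(l) = 2π − Σ_{σ} Σ_{p : glue σ p = e} α_p(l_σ)`. -/
noncomputable def Ric [Fintype T] [DecidableEq E] (glue : T → Fin 6 → E) (l : E → ℝ)
    (e : E) : ℝ :=
  2 * Real.pi -
    ∑ σ : T, ∑ p : Fin 6, if glue σ p = e then dihedral (pullback glue l σ) p else 0

/-- `𝓛(M,𝒯)`: the set of decorated hyperbolic polyhedral metrics. -/
def LMdom (glue : T → Fin 6 → E) : Set (E → ℝ) := {l | ∀ σ : T, pullback glue l σ ∈ Ldom}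

/-- `H̃(l) = Σ_σ cov(l_σ) − 2π Σ_e l_e`. -/
noncomputable def Htilde [Fintype T] [Fintype E] (glue : T → Fin 6 → E) (l : E → ℝ) : ℝ :=
  ∑ σ : T, cov6 (pullback glue l σ) - 2 * Real.pi * ∑ e : E, l e

/-- The valence `d_e` of an edge `e`: the number of pairs `(σ, p)` glued to `e`. -/
def valence [Fintype T] [DecidableEq E] (glue : T → Fin 6 → E) (e : E) : ℕ :=
  ∑ σ : T, ∑ p : Fin 6, if glue σ p = e then 1 else 0

/-- `(M,𝒯)` is edge-transitive: any edge can be mapped to any other edge by an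
automorphism of the triangulation. -/
def EdgeTransitive (glue : T → Fin 6 → E) : Prop :=
  ∀ e e' : E, ∃ (φ : T ≃ T) (ψ : E ≃ E) (ρ : T → Fin 4 ≃ Fin 4),
    (∀ (σ : T) (i j : Fin 4), i ≠ j →
      glue (φ σ) (edgeOf (ρ σ i) (ρ σ j)) = ψ (glue σ (edgeOf i j))) ∧ ψ e = e'

section AbstractODE
open scoped NNReal Topology

variable {ι : Type*} [Fintype ι]

/-- Comparison of two approximate trajectories of a dissipative vector field. -/
lemma ode_compare (F G H : (ι → ℝ) → (ι → ℝ)) (M ε N : ℝ) (hN : 0 ≤ N)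
    (hmono : ∀ x y, ∑ e, (F x e - F y e) * (x e - y e) ≤ 0)
    (hG : ∀ z, ‖G z‖ ≤ M) (hH : ∀ z, ‖H z‖ ≤ M)
    (hGF : ∀ z, ‖G z - F z‖ ≤ ε) (hHF : ∀ z, ‖H z - F z‖ ≤ ε)
    (x y : ℝ → ι → ℝ) (h0 : x 0 = y 0)
    (hx : ∀ t ∈ Icc 0 N, HasDerivWithinAt x (G (x t)) (Icc 0 N) t)
    (hy : ∀ t ∈ Icc 0 N, HasDerivWithinAt y (H (y t)) (Icc 0 N) t) :
    ∀ t ∈ Icc 0 N, ‖x t - y t‖ ^ 2 ≤ ε * (8 * M * N * N * Fintype.card ι) := by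
  have hM : 0 ≤ M := (norm_nonneg _).trans (hG 0)
  have hε : 0 ≤ ε := (norm_nonneg _).trans (hGF 0)
  have hB : ∀ t ∈ Icc 0 N, ‖x t - y t‖ ≤ 2 * M * N := by
    intro t ht
    have := norm_image_sub_le_of_norm_deriv_le_segment' (f := fun s => x s - y s)
      (f' := fun s => G (x s) - H (y s)) (C := 2 * M)
      (fun s hs => (hx s hs).sub (hy s hs))
      (fun s hs => (norm_sub_le _ _).trans (by linarith [hG (x s), hH (y s)])) t ht
    simp only [h0, sub_self, sub_zero] at this
    refine this.trans ?_
    gcongr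
    exact ht.2
  set D : ℝ → ℝ := fun t => ∑ e, (x t e - y t e) ^ 2 with hD
  have hDd : ∀ t ∈ Icc 0 N, HasDerivWithinAt D
      (∑ e, 2 * ((x t e - y t e) * (G (x t) e - H (y t) e))) (Icc 0 N) t := by
    intro t ht
    refine HasDerivWithinAt.fun_sum fun e _ => ?_
    have h1 := (hasDerivWithinAt_pi.1 (hx t ht) e).sub (hasDerivWithinAt_pi.1 (hy t ht) e)
    have h2 := h1.pow 2
    refine HasDerivWithinAt.congr_deriv h2 ?_
    simp only [Pi.sub_apply]
    push_cast
    ring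
  have hbd : ∀ t ∈ Icc 0 N, ∑ e, 2 * ((x t e - y t e) * (G (x t) e - H (y t) e))
      ≤ ε * (8 * M * N * Fintype.card ι) := by
    intro t ht
    have h1 : ∀ e, 2 * ((x t e - y t e) * (G (x t) e - H (y t) e)) ≤
        2 * ((F (x t) e - F (y t) e) * (x t e - y t e)) + ε * (8 * M * N) := by
      intro e
      have a1 : |G (x t) e - F (x t) e| ≤ ε := by
        simpa using (norm_le_pi_norm (G (x t) - F (x t)) e).trans (hGF (x t))
      have a2 : |H (y t) e - F (y t) e| ≤ ε := by
        simpa using (norm_le_pi_norm (H (y t) - F (y t)) e).trans (hHF (y t))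
      have a3 : |x t e - y t e| ≤ 2 * M * N := by
        simpa using (norm_le_pi_norm (x t - y t) e).trans (hB t ht)
      have a4 : |(G (x t) e - F (x t) e) - (H (y t) e - F (y t) e)| ≤ 2 * ε :=
        (abs_sub _ _).trans (by linarith)
      have a5 : (x t e - y t e) * ((G (x t) e - F (x t) e) - (H (y t) e - F (y t) e))
          ≤ (2 * M * N) * (2 * ε) := by
        refine (le_abs_self _).trans ?_
        rw [abs_mul]
        gcongr
      nlinarith
    calc _ ≤ ∑ e, (2 * ((F (x t) e - F (y t) e) * (x t e - y t e)) + ε * (8 * M * N)) :=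
          Finset.sum_le_sum fun e _ => h1 e
      _ = 2 * ∑ e, (F (x t) e - F (y t) e) * (x t e - y t e)
            + Fintype.card ι * (ε * (8 * M * N)) := by
          rw [Finset.sum_add_distrib, Finset.mul_sum]; simp
      _ ≤ _ := by nlinarith [hmono (x t) (y t)]
  have hle : ∀ ⦃t⦄, t ∈ Icc 0 N → D t ≤ ε * (8 * M * N * Fintype.card ι) * t := by
    refine image_le_of_deriv_right_le_deriv_boundary (a := 0) (b := N)
      (f' := fun t => ∑ e, 2 * ((x t e - y t e) * (G (x t) e - H (y t) e)))
      (B' := fun _ => ε * (8 * M * N * Fintype.card ι))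
      (fun t ht => (hDd t ht).continuousWithinAt)
      (fun t ht => (hDd t (Ico_subset_Icc_self ht)).mono_of_mem_nhdsWithin
        (Icc_mem_nhdsGE_of_mem ht)) ?_ (by fun_prop) ?_
      (fun t ht => hbd t (Ico_subset_Icc_self ht))
    · simp [hD, h0]
    · intro t _
      simpa using ((hasDerivAt_id t).const_mul
        (ε * (8 * M * N * Fintype.card ι))).hasDerivWithinAt
  intro t ht
  have hDN : D t ≤ ε * (8 * M * N * N * Fintype.card ι) := by
    refine (hle ht).trans ?_
    have : ε * (8 * M * N * Fintype.card ι) * t ≤ ε * (8 * M * N * Fintype.card ι) * N := by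
      gcongr
      exact ht.2
    linarith
  have hn : ‖x t - y t‖ ≤ √(D t) := by
    refine (pi_norm_le_iff_of_nonneg (sqrt_nonneg _)).2 fun e => ?_
    rw [Real.norm_eq_abs]
    refine Real.abs_le_sqrt ?_
    exact Finset.single_le_sum (f := fun e => (x t e - y t e) ^ 2)
      (fun e _ => sq_nonneg _) (Finset.mem_univ e)
  have hDnn : 0 ≤ D t := Finset.sum_nonneg fun e _ => sq_nonneg _
  calc ‖x t - y t‖ ^ 2 ≤ √(D t) ^ 2 := by gcongr
    _ = D t := Real.sq_sqrt hDnn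
    _ ≤ _ := hDN

lemma ode_unique (F : (ι → ℝ) → (ι → ℝ)) (M : ℝ) (N : ℝ) (hN : 0 ≤ N)
    (hmono : ∀ x y, ∑ e, (F x e - F y e) * (x e - y e) ≤ 0)
    (hF : ∀ z, ‖F z‖ ≤ M)
    (x y : ℝ → ι → ℝ) (h0 : x 0 = y 0)
    (hx : ∀ t ∈ Icc 0 N, HasDerivAt x (F (x t)) t)
    (hy : ∀ t ∈ Icc 0 N, HasDerivAt y (F (y t)) t) : ∀ t ∈ Icc 0 N, x t = y t := by
  intro t ht
  have := ode_compare F F F M 0 N hN hmono hF hF (by simp) (by simp) x y h0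
    (fun t ht => (hx t ht).hasDerivWithinAt) (fun t ht => (hy t ht).hasDerivWithinAt) t ht
  rw [zero_mul] at this
  have h2 : ‖x t - y t‖ = 0 := by
    have := sq_nonneg ‖x t - y t‖
    exact pow_eq_zero_iff (two_ne_zero) |>.1 (by linarith)
  exact sub_eq_zero.1 (norm_eq_zero.1 h2)

lemma ode_approx_exists (G : (ι → ℝ) → (ι → ℝ)) (hG : ContDiff ℝ 1 G) (M N : ℝ) (hN : 0 ≤ N)
    (hGM : ∀ z, ‖G z‖ ≤ M) (x₀ : ι → ℝ) :
    ∃ x : ℝ → ι → ℝ, x 0 = x₀ ∧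
      ∀ t ∈ Icc 0 N, HasDerivWithinAt x (G (x t)) (Icc 0 N) t := by
  have hM : 0 ≤ M := (norm_nonneg _).trans (hGM 0)
  obtain ⟨K, hK⟩ := (hG.contDiffOn (s := Metric.closedBall x₀ (M * N))).locallyLipschitzOn
    (convex_closedBall _ _) |>.exists_lipschitzOnWith_of_compact (isCompact_closedBall _ _)
  have hP : IsPicardLindelof (fun _ => G) (tmin := 0) (tmax := N) ⟨0, by simpa using hN⟩ x₀
      ⟨M * N, by positivity⟩ 0 ⟨M, hM⟩ K :=
    IsPicardLindelof.of_time_independent (fun z _ => hGM z) hK (by simp [hN]; rfl)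
  exact hP.exists_eq_forall_mem_Icc_hasDerivWithinAt₀

lemma ode_exists_Icc (F : (ι → ℝ) → (ι → ℝ)) (hFc : Continuous F) (M : ℝ) (N : ℝ) (hN : 0 ≤ N)
    (hmono : ∀ x y, ∑ e, (F x e - F y e) * (x e - y e) ≤ 0)
    (hF : ∀ z, ‖F z‖ ≤ M) (x₀ : ι → ℝ) :
    ∃ x : ℝ → ι → ℝ, x 0 = x₀ ∧ ∀ t ∈ Icc 0 N, HasDerivAt x (F (x t)) t := by
  have hM : 0 ≤ M := (norm_nonneg _).trans (hF 0)
  have hex : ∀ n : ℕ, ∃ G : (ι → ℝ) → (ι → ℝ), ContDiff ℝ 1 G ∧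
      ∀ z, ‖G z - F z‖ ≤ 1 / ((n : ℝ) + 1) := by
    intro n
    obtain ⟨G, h1, h2, -⟩ := hFc.exists_contDiff_approx (ε := fun _ => 1 / ((n : ℝ) + 1)) 1
      continuous_const (fun _ => by positivity)
    exact ⟨G, h1, fun z => by rw [← dist_eq_norm]; exact (h2 z).le⟩
  choose G hGd hGF using hex
  have hε1 : ∀ n : ℕ, 1 / ((n : ℝ) + 1) ≤ 1 := fun n => by
    rw [div_le_one (by positivity)]; simp
  have hGM : ∀ n z, ‖G n z‖ ≤ M + 1 := by
    intro n z
    have := norm_sub_norm_le (G n z) (F z)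
    linarith [hGF n z, hF z, hε1 n]
  choose x hx0 hx using fun n => ode_approx_exists (G n) (hGd n) (M + 1) N hN (hGM n) x₀
  set c : ℝ → ℝ := fun s => max 0 (min s N) with hc
  have hcc : Continuous c := by fun_prop
  have hcm : ∀ s, c s ∈ Icc 0 N := fun s => ⟨le_max_left _ _, max_le hN (min_le_right _ _)⟩
  have hci : ∀ s ∈ Icc 0 N, c s = s := fun s hs => by
    simp [hc, min_eq_left hs.2, max_eq_right hs.1]
  set y : ℕ → ℝ → ι → ℝ := fun n s => x n (c s) with hy
  have hyc : ∀ n, Continuous (y n) := fun n =>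
    ContinuousOn.comp_continuous (s := Icc 0 N)
      (fun t ht => (hx n t ht).continuousWithinAt) hcc hcm
  set C : ℝ := 8 * (M + 1) * N * N * Fintype.card ι with hC
  have hC0 : 0 ≤ C := by positivity
  have hcmp : ∀ n m k : ℕ, k ≤ n → k ≤ m → ∀ s, dist (y n s) (y m s) ≤
      √(1 / ((k : ℝ) + 1) * C) := by
    intro n m k hn hm s
    rw [dist_eq_norm]
    refine Real.le_sqrt_of_sq_le ?_
    refine ode_compare F (G n) (G m) (M + 1) (1 / ((k : ℝ) + 1)) N hN hmono (hGM n) (hGM m)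
      (fun z => (hGF n z).trans ?_) (fun z => (hGF m z).trans ?_) (x n) (x m)
      ((hx0 n).trans (hx0 m).symm) (hx n) (hx m) _ (hcm s)
    · exact Nat.one_div_le_one_div hn
    · exact Nat.one_div_le_one_div hm
  have hb0 : Tendsto (fun k : ℕ => √(1 / ((k : ℝ) + 1) * C)) atTop (𝓝 0) := by
    have h1 := (tendsto_one_div_add_atTop_nhds_zero_nat (𝕜 := ℝ)).mul_const C
    have h2 := (Real.continuous_sqrt.tendsto _).comp h1
    simpa [Function.comp_def] using h2
  have hlim : ∀ s, ∃ z, Tendsto (fun n => y n s) atTop (𝓝 z) := fun s =>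
    cauchySeq_tendsto_of_complete
      (cauchySeq_of_le_tendsto_0 _ (fun n m k hn hm => hcmp n m k hn hm s) hb0)
  choose w hw using hlim
  have hunif : TendstoUniformly y w atTop := by
    rw [Metric.tendstoUniformly_iff]
    intro δ hδ
    filter_upwards [hb0.eventually (gt_mem_nhds hδ)] with k hk s
    refine lt_of_le_of_lt ?_ hk
    refine le_of_tendsto ((hw s).dist tendsto_const_nhds) ?_
    filter_upwards [eventually_ge_atTop k] with n hn
    exact hcmp n k k hn le_rfl s
  have hwc : Continuous w := hunif.continuous (Eventually.frequently (Eventually.of_forall hyc))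
  have hGy : ∀ s, Tendsto (fun n => G n (y n s)) atTop (𝓝 (F (w s))) := by
    intro s
    have h1 : Tendsto (fun n => F (y n s)) atTop (𝓝 (F (w s))) := (hFc.tendsto _).comp (hw s)
    have h2 : Tendsto (fun n => G n (y n s) - F (y n s)) atTop (𝓝 0) :=
      squeeze_zero_norm (fun n => hGF n _) (tendsto_one_div_add_atTop_nhds_zero_nat (𝕜 := ℝ))
    simpa using h2.add h1
  have hGyc : ∀ n, Continuous fun s => G n (y n s) := fun n => (hGd n).continuous.comp (hyc n)
  have hintegral : ∀ n, ∀ t ∈ Icc 0 N, x n t = x₀ + ∫ s in (0:ℝ)..t, G n (y n s) := by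
    intro n t ht
    have := intervalIntegral.integral_eq_sub_of_hasDeriv_right_of_le (a := 0) (b := t)
      (f := x n) (f' := fun s => G n (y n s)) ht.1
      (fun s hs => ((hx n s ⟨hs.1, hs.2.trans ht.2⟩).continuousWithinAt).mono
        (Icc_subset_Icc_right ht.2))
      (fun s hs => by
        have hs' : s ∈ Icc 0 N := ⟨hs.1.le, hs.2.le.trans ht.2⟩
        have h1 := hx n s hs'
        simp only [hy, hci s hs']
        exact h1.mono_of_mem_nhdsWithin (Icc_mem_nhdsGT_of_mem ⟨hs.1.le, hs.2.trans_le ht.2⟩))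
      ((hGyc n).intervalIntegrable _ _)
    rw [this, hx0]; abel
  have hlimint : ∀ t, Tendsto (fun n => ∫ s in (0:ℝ)..t, G n (y n s)) atTop
      (𝓝 (∫ s in (0:ℝ)..t, F (w s))) := by
    intro t
    refine intervalIntegral.tendsto_integral_filter_of_dominated_convergence (fun _ => M + 1)
      (Eventually.of_forall fun n => (hGyc n).aestronglyMeasurable)
      (Eventually.of_forall fun n => Eventually.of_forall fun s _ => hGM n _)
      (by simp) (Eventually.of_forall fun s _ => hGy s)
  have hweq : ∀ t ∈ Icc 0 N, w t = x₀ + ∫ s in (0:ℝ)..t, F (w s) := by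
    intro t ht
    refine tendsto_nhds_unique (hw t) ?_
    have := (hlimint t).const_add x₀
    refine this.congr fun n => ?_
    rw [← hintegral n t ht]
    simp only [hy, hci t ht]
  refine ⟨fun t => x₀ + ∫ s in (0:ℝ)..t, F (w s), by simp, fun t ht => ?_⟩
  have hd := (((hFc.comp hwc).integral_hasStrictDerivAt 0 t).hasDerivAt).const_add x₀
  simp only [← hweq t ht]
  exact hd

lemma ode_global (F : (ι → ℝ) → (ι → ℝ)) (hFc : Continuous F) (M : ℝ)
    (hmono : ∀ x y, ∑ e, (F x e - F y e) * (x e - y e) ≤ 0)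
    (hF : ∀ z, ‖F z‖ ≤ M) (x₀ : ι → ℝ) :
    ∃ x : ℝ → ι → ℝ, (x 0 = x₀ ∧ ∀ t : ℝ, 0 ≤ t → HasDerivAt x (F (x t)) t) ∧
      ∀ y : ℝ → ι → ℝ, (y 0 = x₀ ∧ ∀ t : ℝ, 0 ≤ t → HasDerivAt y (F (y t)) t) →
        ∀ t : ℝ, 0 ≤ t → x t = y t := by
  choose X hX0 hX using fun n : ℕ =>
    ode_exists_Icc F hFc M (n : ℝ) (Nat.cast_nonneg n) hmono hF x₀
  have hagree : ∀ (n m : ℕ) (s : ℝ), 0 ≤ s → s ≤ n → s ≤ m → X n s = X m s := by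
    intro n m s hs hn hm
    exact ode_unique F M s hs hmono hF (X n) (X m) ((hX0 n).trans (hX0 m).symm)
      (fun t ht => hX n t ⟨ht.1, ht.2.trans hn⟩) (fun t ht => hX m t ⟨ht.1, ht.2.trans hm⟩)
      s ⟨hs, le_rfl⟩
  set l : ℝ → ι → ℝ := fun t => if t < 1 then X 1 t else X ⌈t⌉₊ t with hl
  have hl0 : l 0 = x₀ := by simp [hl, hX0]
  have hlX : ∀ (n : ℕ) (s : ℝ), 0 ≤ s → s ≤ n → l s = X n s := by
    intro n s hs hn
    by_cases h1 : s < 1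
    · simp only [hl, if_pos h1]
      exact hagree _ _ s hs (by simpa using h1.le) hn
    · simp only [hl, if_neg h1]
      exact hagree _ _ s hs (Nat.le_ceil s) hn
  have hld : ∀ t : ℝ, 0 ≤ t → HasDerivAt l (F (l t)) t := by
    intro t ht
    by_cases h1 : t < 1
    · have he : l =ᶠ[𝓝 t] X 1 := by
        filter_upwards [Iio_mem_nhds h1] with s hs
        simp only [hl, if_pos (show s < 1 from hs)]
      rw [he.self_of_nhds]
      exact (hX 1 t ⟨ht, by simpa using h1.le⟩).congr_of_eventuallyEq he
    · have h0 : 0 < t := by linarith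
      have hn : t < ((⌈t⌉₊ + 1 : ℕ) : ℝ) := by
        push_cast; linarith [Nat.le_ceil t]
      have he : l =ᶠ[𝓝 t] X (⌈t⌉₊ + 1) := by
        filter_upwards [Ioo_mem_nhds h0 hn] with s hs
        exact hlX _ s hs.1.le hs.2.le
      rw [he.self_of_nhds]
      exact (hX _ t ⟨ht, hn.le⟩).congr_of_eventuallyEq he
  refine ⟨l, ⟨hl0, hld⟩, fun y hy t ht => ?_⟩
  exact ode_unique F M t ht hmono hF l y (hl0.trans hy.1.symm)
    (fun s hs => hld s hs.1) (fun s hs => hy.2 s hs.1) t ⟨ht, le_rfl⟩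

end AbstractODE

section Angles
open scoped Topology

/-- The angle opposite to `a`; `Real.arccos` does the clamping. -/
def ang (a b c : ℝ) : ℝ := Real.arccos ((b ^ 2 + c ^ 2 - a ^ 2) / (2 * b * c))

lemma ang_nonneg (a b c : ℝ) : 0 ≤ ang a b c := Real.arccos_nonneg _
lemma ang_le_pi (a b c : ℝ) : ang a b c ≤ π := Real.arccos_le_pi _

lemma ang_eq_pi {a b c : ℝ} (hb : 0 < b) (hc : 0 < c) (h : b + c ≤ a) : ang a b c = π := by
  refine Real.arccos_of_le_neg_one ?_
  rw [div_le_iff₀ (by positivity)]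
  nlinarith

lemma ang_eq_zero {a b c : ℝ} (ha : 0 < a) (hb : 0 < b) (hc : 0 < c)
    (h : a + c ≤ b ∨ a + b ≤ c) : ang a b c = 0 := by
  refine Real.arccos_of_one_le ?_
  rw [le_div_iff₀ (by positivity)]
  rcases h with h | h <;> nlinarith

lemma genAngle_eq (x : Fin 3 → ℝ) (hx : ∀ i, 0 < x i) (i : Fin 3) :
    genAngle x i = ang (x i) (x (i + 1)) (x (i + 2)) := by
  unfold genAngle
  split_ifs with h1 h2
  · rw [ang_eq_pi (hx _) (hx _) h1]
  · rw [ang_eq_zero (hx _) (hx _) (hx _) h2]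
  · rfl

/-- Strict triangle: sines of the angles. -/
lemma sin_ang {a b c : ℝ} (ha : 0 < a) (hb : 0 < b) (hc : 0 < c) :
    Real.sin (ang a b c) =
      a * (√((a + b + c) * (b + c - a) * (a + c - b) * (a + b - c)) / (2 * a * b * c)) := by
  unfold ang
  rw [Real.sin_arccos]
  have : 1 - ((b ^ 2 + c ^ 2 - a ^ 2) / (2 * b * c)) ^ 2 =
      ((a + b + c) * (b + c - a) * (a + c - b) * (a + b - c)) / (2 * b * c) ^ 2 := by
    field_simp
    ring
  rw [this, Real.sqrt_div' _ (by positivity), Real.sqrt_sq (by positivity)]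
  field_simp

lemma cos_ang {a b c : ℝ} (hb : 0 < b) (hc : 0 < c)
    (h1 : a < b + c) (h2 : b < c + a) (h3 : c < a + b) :
    Real.cos (ang a b c) = (b ^ 2 + c ^ 2 - a ^ 2) / (2 * b * c) := by
  refine Real.cos_arccos ?_ ?_
  · rw [le_div_iff₀ (by positivity)]; nlinarith
  · rw [div_le_iff₀ (by positivity)]; nlinarith

lemma tri_facts {a b c : ℝ} (ha : 0 < a) (hb : 0 < b) (hc : 0 < c)
    (h1 : a < b + c) (h2 : b < c + a) (h3 : c < a + b) :
    ∃ κ : ℝ, 0 < κ ∧ Real.sin (ang a b c) = a * κ ∧ Real.sin (ang b c a) = b * κ ∧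
      Real.sin (ang c a b) = c * κ ∧ ang a b c + ang b c a + ang c a b = π := by
  set S := (a + b + c) * (b + c - a) * (a + c - b) * (a + b - c) with hS
  have hSpos : 0 < S := by
    have e1 : 0 < b + c - a := by linarith
    have e2 : 0 < a + c - b := by linarith
    have e3 : 0 < a + b - c := by linarith
    positivity
  have sA := sin_ang ha hb hc
  have sB := sin_ang hb hc ha
  have sC := sin_ang hc ha hb
  rw [show (b + c + a) * (c + a - b) * (b + a - c) * (b + c - a) = S by rw [hS]; ring,
    show 2 * b * c * a = 2 * a * b * c by ring] at sB
  rw [show (c + a + b) * (a + b - c) * (c + b - a) * (c + a - b) = S by rw [hS]; ring,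
    show 2 * c * a * b = 2 * a * b * c by ring] at sC
  rw [← hS] at sA
  have cA := cos_ang hb hc h1 h2 h3
  have cB := cos_ang hc ha h2 h3 h1
  have cC := cos_ang ha hb h3 h1 h2
  set κ := √S / (2 * a * b * c) with hκ
  have hκpos : 0 < κ := by positivity
  have hκ2 : κ ^ 2 = S / (2 * a * b * c) ^ 2 := by
    rw [hκ, div_pow, Real.sq_sqrt hSpos.le]
  refine ⟨κ, hκpos, sA, sB, sC, ?_⟩
  have hcos : Real.cos (ang a b c + ang b c a) = Real.cos (π - ang c a b) := by
    rw [Real.cos_add, Real.cos_pi_sub, sA, sB, cA, cB, cC,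
      show a * κ * (b * κ) = a * b * κ ^ 2 by ring, hκ2, hS]
    field_simp
    ring
  have hsin : Real.sin (ang a b c + ang b c a) = c * κ := by
    rw [Real.sin_add, sA, sB, cA, cB]
    field_simp
    ring
  have hlt : ang a b c + ang b c a ≤ π := by
    by_contra hgt
    push Not at hgt
    have h5 : Real.sin (ang a b c + ang b c a - π) ≥ 0 :=
      Real.sin_nonneg_of_nonneg_of_le_pi (by linarith)
        (by linarith [ang_le_pi a b c, ang_le_pi b c a])
    rw [Real.sin_sub_pi, hsin] at h5
    have : 0 < c * κ := by positivity
    linarith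
  have := Real.injOn_cos (x₁ := ang a b c + ang b c a) (x₂ := π - ang c a b)
    ⟨add_nonneg (ang_nonneg _ _ _) (ang_nonneg _ _ _), hlt⟩
    ⟨by linarith [ang_le_pi c a b], by linarith [ang_nonneg c a b]⟩ hcos
  linarith

/-- Positive semidefiniteness of the cotangent form. -/
lemma cot_form_nonneg {p q r : ℝ} (hp : 0 < p) (hq : 0 < q) (hr : 0 < r) (h : p + q + r = π)
    (x y z : ℝ) (hxyz : x + y + z = 0) :
    0 ≤ x * (x * Real.cos p / Real.sin p) + y * (y * Real.cos q / Real.sin q)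
      + z * (z * Real.cos r / Real.sin r) := by
  have sp : 0 < Real.sin p := Real.sin_pos_of_pos_of_lt_pi hp (by linarith)
  have sq : 0 < Real.sin q := Real.sin_pos_of_pos_of_lt_pi hq (by linarith)
  have sr : 0 < Real.sin r := Real.sin_pos_of_pos_of_lt_pi hr (by linarith)
  have hr' : r = π - (p + q) := by linarith
  have e1 : Real.sin r = Real.sin p * Real.cos q + Real.cos p * Real.sin q := by
    rw [hr', Real.sin_pi_sub, Real.sin_add]
  have e2 : Real.cos r = Real.sin p * Real.sin q - Real.cos p * Real.cos q := by
    rw [hr', Real.cos_pi_sub, Real.cos_add]; ring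
  have hz : z = -(x + y) := by linarith
  have i1 := Real.sin_sq_add_cos_sq p
  have i2 := Real.sin_sq_add_cos_sq q
  have i3 := Real.sin_sq_add_cos_sq r
  have key : x * (x * Real.cos p / Real.sin p) + y * (y * Real.cos q / Real.sin q)
      + z * (z * Real.cos r / Real.sin r) =
      ((Real.sin q * x + Real.cos r * Real.sin p * y) ^ 2
        + (Real.sin r * Real.sin p * y) ^ 2) / (Real.sin p * Real.sin q * Real.sin r) := by
    have n1 : x ^ 2 * Real.cos p * Real.sin q * Real.sin r
        + y ^ 2 * Real.cos q * Real.sin p * Real.sin r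
        + z ^ 2 * Real.cos r * Real.sin p * Real.sin q =
        (Real.sin q * x + Real.cos r * Real.sin p * y) ^ 2
        + (Real.sin r * Real.sin p * y) ^ 2 := by
      have f1 : Real.cos p * Real.sin r + Real.cos r * Real.sin p = Real.sin q := by
        rw [e1, e2]; linear_combination Real.sin q * i1
      have f2 : Real.cos q * Real.sin r + Real.cos r * Real.sin q = Real.sin p := by
        rw [e1, e2]; linear_combination Real.sin p * i2
      rw [hz]
      linear_combination x ^ 2 * Real.sin q * f1 + y ^ 2 * Real.sin p * f2
        - y ^ 2 * Real.sin p ^ 2 * i3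
    rw [← n1]
    field_simp
  rw [key]
  positivity

lemma log_sin_mono {p q r p' q' r' : ℝ} (hp : 0 < p) (hq : 0 < q) (hr : 0 < r)
    (h : p + q + r = π) (hp' : 0 < p') (hq' : 0 < q') (hr' : 0 < r') (h' : p' + q' + r' = π) :
    0 ≤ (p - p') * (Real.log (Real.sin p) - Real.log (Real.sin p'))
      + (q - q') * (Real.log (Real.sin q) - Real.log (Real.sin q'))
      + (r - r') * (Real.log (Real.sin r) - Real.log (Real.sin r')) := by
  have seg : ∀ {p p' : ℝ}, 0 < p → 0 < p' → ∀ t ∈ Icc (0:ℝ) 1, 0 < p' + t * (p - p') := by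
    intro p p' hp hp' t ht
    rcases eq_or_lt_of_le ht.1 with h0 | h0
    · rw [← h0]; simpa using hp'
    · nlinarith [mul_pos h0 hp, mul_nonneg (sub_nonneg.2 ht.2) hp'.le]
  have hsum : ∀ t : ℝ, (p' + t * (p - p')) + (q' + t * (q - q')) + (r' + t * (r - r')) = π := by
    intro t
    linear_combination t * h + (1 - t) * h'
  set f : ℝ → ℝ := fun t => (p - p') * Real.log (Real.sin (p' + t * (p - p')))
    + (q - q') * Real.log (Real.sin (q' + t * (q - q')))
    + (r - r') * Real.log (Real.sin (r' + t * (r - r'))) with hf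
  have hd1 : ∀ (p p' t : ℝ), 0 < p' + t * (p - p') → p' + t * (p - p') < π →
      HasDerivAt (fun t => (p - p') * Real.log (Real.sin (p' + t * (p - p'))))
        ((p - p') * ((p - p') * Real.cos (p' + t * (p - p')) / Real.sin (p' + t * (p - p')))) t := by
    intro p p' t h0 h1
    have hs := Real.sin_pos_of_pos_of_lt_pi h0 h1
    have hlin : HasDerivAt (fun t : ℝ => p' + t * (p - p')) (p - p') t := by
      simpa using ((hasDerivAt_id t).mul_const (p - p')).const_add p'
    have := ((hlin.sin).log hs.ne').const_mul (p - p')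
    refine HasDerivAt.congr_deriv this ?_
    ring
  have hd : ∀ t ∈ Icc (0:ℝ) 1, HasDerivAt f
      ((p - p') * ((p - p') * Real.cos (p' + t * (p - p')) / Real.sin (p' + t * (p - p')))
      + (q - q') * ((q - q') * Real.cos (q' + t * (q - q')) / Real.sin (q' + t * (q - q')))
      + (r - r') * ((r - r') * Real.cos (r' + t * (r - r')) / Real.sin (r' + t * (r - r')))) t := by
    intro t ht
    have g1 := seg hp hp' t ht
    have g2 := seg hq hq' t ht
    have g3 := seg hr hr' t ht
    have g := hsum t
    exact ((hd1 p p' t g1 (by linarith)).add (hd1 q q' t g2 (by linarith))).add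
      (hd1 r r' t g3 (by linarith))
  have hmono : MonotoneOn f (Icc 0 1) := by
    refine monotoneOn_of_hasDerivWithinAt_nonneg (convex_Icc 0 1)
      (fun t ht => (hd t ht).continuousAt.continuousWithinAt)
      (fun t ht => (hd t (interior_subset ht)).hasDerivWithinAt) ?_
    intro t ht
    have ht := interior_subset ht
    exact cot_form_nonneg (seg hp hp' t ht) (seg hq hq' t ht) (seg hr hr' t ht) (hsum t)
      _ _ _ (by linarith)
  have := hmono (left_mem_Icc.2 zero_le_one) (right_mem_Icc.2 zero_le_one) zero_le_one
  simp only [hf, zero_mul, one_mul, add_zero, add_sub_cancel] at this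
  linarith

/-- The monotonicity pairing of two triples of logarithmic side lengths. -/
def pairQ (u v w u' v' w' : ℝ) : ℝ :=
  (ang (exp u) (exp v) (exp w) - ang (exp u') (exp v') (exp w')) * (u - u')
  + (ang (exp v) (exp w) (exp u) - ang (exp v') (exp w') (exp u')) * (v - v')
  + (ang (exp w) (exp u) (exp v) - ang (exp w') (exp u') (exp v')) * (w - w')

/-- Strict triangle inequalities. -/
def StrictTri (u v w : ℝ) : Prop :=
  exp u < exp v + exp w ∧ exp v < exp w + exp u ∧ exp w < exp u + exp v

lemma pairQ_cyc (u v w u' v' w' : ℝ) : pairQ u v w u' v' w' = pairQ v w u v' w' u' := by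
  unfold pairQ; ring

lemma pairQ_symm (u v w u' v' w' : ℝ) : pairQ u v w u' v' w' = pairQ u' v' w' u v w := by
  unfold pairQ; ring

lemma ang_pos_of_sin_pos {a b c : ℝ} (h : 0 < Real.sin (ang a b c)) : 0 < ang a b c := by
  rcases eq_or_lt_of_le (ang_nonneg a b c) with h0 | h0
  · rw [← h0] at h; simp at h
  · exact h0

lemma pairQ_strict {u v w u' v' w' : ℝ} (h : StrictTri u v w) (h' : StrictTri u' v' w') :
    0 ≤ pairQ u v w u' v' w' := by
  obtain ⟨k, hk, s1, s2, s3, hs⟩ := tri_facts (exp_pos u) (exp_pos v) (exp_pos w) h.1 h.2.1 h.2.2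
  obtain ⟨k', hk', s1', s2', s3', hs'⟩ :=
    tri_facts (exp_pos u') (exp_pos v') (exp_pos w') h'.1 h'.2.1 h'.2.2
  have hm := log_sin_mono
    (ang_pos_of_sin_pos (s1 ▸ mul_pos (exp_pos _) hk))
    (ang_pos_of_sin_pos (s2 ▸ mul_pos (exp_pos _) hk))
    (ang_pos_of_sin_pos (s3 ▸ mul_pos (exp_pos _) hk)) hs
    (ang_pos_of_sin_pos (s1' ▸ mul_pos (exp_pos _) hk'))
    (ang_pos_of_sin_pos (s2' ▸ mul_pos (exp_pos _) hk'))
    (ang_pos_of_sin_pos (s3' ▸ mul_pos (exp_pos _) hk')) hs'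
  rw [s1, s2, s3, s1', s2', s3'] at hm
  simp only [Real.log_mul (exp_pos _).ne' hk.ne', Real.log_mul (exp_pos _).ne' hk'.ne',
    Real.log_exp] at hm
  unfold pairQ
  refine hm.trans (le_of_eq ?_)
  linear_combination (Real.log k - Real.log k') * (hs - hs')

lemma continuous_ang_exp {X : Type*} [TopologicalSpace X] {f g h : X → ℝ}
    (hf : Continuous f) (hg : Continuous g) (hh : Continuous h) :
    Continuous fun x => ang (exp (f x)) (exp (g x)) (exp (h x)) := by
  unfold ang
  refine Real.continuous_arccos.comp ?_
  refine Continuous.div (by fun_prop) (by fun_prop) fun x => ?_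
  positivity

lemma pairQ_degenerate {u v w u' v' w' : ℝ} (h : exp v + exp w ≤ exp u)
    (H : ∀ u, StrictTri u v w → 0 ≤ pairQ u v w u' v' w') : 0 ≤ pairQ u v w u' v' w' := by
  have hv := exp_pos v
  have hw := exp_pos w
  set m := Real.log (exp v + exp w) with hm
  have hem : exp m = exp v + exp w := Real.exp_log (by positivity)
  have hmu : m ≤ u := by rw [← Real.exp_le_exp, hem]; exact h
  have hcont : Continuous fun s => pairQ s v w u' v' w' := by
    unfold pairQ
    have c1 := continuous_ang_exp continuous_id (continuous_const (y := v)) (continuous_const (y := w))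
    have c2 := continuous_ang_exp (continuous_const (y := v)) (continuous_const (y := w)) continuous_id
    have c3 := continuous_ang_exp (continuous_const (y := w)) continuous_id (continuous_const (y := v))
    simp only [id] at c1 c2 c3
    fun_prop
  have hlim : 0 ≤ pairQ m v w u' v' w' := by
    refine ge_of_tendsto (x := 𝓝[<] m) ((hcont.tendsto m).mono_left nhdsWithin_le_nhds) ?_
    have e1 : ∀ᶠ s in 𝓝 m, exp v - exp w < exp s :=
      (Real.continuous_exp.tendsto m).eventually (lt_mem_nhds (by rw [hem]; linarith))
    have e2 : ∀ᶠ s in 𝓝 m, exp w - exp v < exp s :=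
      (Real.continuous_exp.tendsto m).eventually (lt_mem_nhds (by rw [hem]; linarith))
    filter_upwards [nhdsWithin_le_nhds e1, nhdsWithin_le_nhds e2, self_mem_nhdsWithin] with s a1 a2 a3
    refine H s ⟨?_, by linarith, by linarith⟩
    rw [← hem]; exact Real.exp_lt_exp.2 a3
  have A : ∀ s, exp v + exp w ≤ exp s → pairQ s v w u' v' w' =
      (π - ang (exp u') (exp v') (exp w')) * (s - u')
      + (0 - ang (exp v') (exp w') (exp u')) * (v - v')
      + (0 - ang (exp w') (exp u') (exp v')) * (w - w') := by
    intro s hs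
    unfold pairQ
    rw [ang_eq_pi hv hw hs, ang_eq_zero hv hw (exp_pos s) (Or.inr hs),
      ang_eq_zero hw (exp_pos s) hv (Or.inl (by linarith))]
  rw [A m hem.ge] at hlim
  rw [A u h]
  have := mul_nonneg (sub_nonneg.2 (ang_le_pi (exp u') (exp v') (exp w'))) (sub_nonneg.2 hmu)
  linarith

lemma pairQ_extend {u' v' w' : ℝ}
    (H : ∀ u v w, StrictTri u v w → 0 ≤ pairQ u v w u' v' w') (u v w : ℝ) :
    0 ≤ pairQ u v w u' v' w' := by
  by_cases h1 : exp v + exp w ≤ exp u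
  · exact pairQ_degenerate h1 fun s hs => H s v w hs
  by_cases h2 : exp w + exp u ≤ exp v
  · rw [pairQ_cyc]
    refine pairQ_degenerate h2 fun s hs => ?_
    rw [← pairQ_cyc]
    exact H u s w ⟨hs.2.2, hs.1, hs.2.1⟩
  by_cases h3 : exp u + exp v ≤ exp w
  · rw [pairQ_cyc, pairQ_cyc]
    refine pairQ_degenerate h3 fun s hs => ?_
    rw [← pairQ_cyc, ← pairQ_cyc]
    exact H u v s ⟨hs.2.1, hs.2.2, hs.1⟩
  push Not at h1 h2 h3
  exact H u v w ⟨h1, h2, h3⟩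

lemma pairQ_nonneg (u v w u' v' w' : ℝ) : 0 ≤ pairQ u v w u' v' w' := by
  refine pairQ_extend (fun u v w h => ?_) u v w
  rw [pairQ_symm]
  refine pairQ_extend (fun u' v' w' h' => ?_) u' v' w'
  exact pairQ_strict h' h

lemma triSides_pos (l : Fin 6 → ℝ) (k : Fin 3) : 0 < triSides l k := by
  unfold triSides
  split_ifs <;> positivity

lemma dihedral_eq (l : Fin 6 → ℝ) (p : Fin 6) :
    dihedral l p = ang (triSides l (quadIndex p)) (triSides l (quadIndex p + 1))
      (triSides l (quadIndex p + 2)) :=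
  genAngle_eq _ (triSides_pos l) _

lemma dihedral_mono (l l' : Fin 6 → ℝ) :
    0 ≤ ∑ p, (dihedral l p - dihedral l' p) * (l p - l' p) := by
  have h := pairQ_nonneg ((l 0 + l 5) / 2) ((l 1 + l 4) / 2) ((l 2 + l 3) / 2)
    ((l' 0 + l' 5) / 2) ((l' 1 + l' 4) / 2) ((l' 2 + l' 3) / 2)
  have h2 : ∑ p, (dihedral l p - dihedral l' p) * (l p - l' p) =
      2 * pairQ ((l 0 + l 5) / 2) ((l 1 + l 4) / 2) ((l 2 + l 3) / 2)
    ((l' 0 + l' 5) / 2) ((l' 1 + l' 4) / 2) ((l' 2 + l' 3) / 2) := by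
    have q0 : quadIndex 0 = 0 := rfl
    have q1 : quadIndex 1 = 1 := rfl
    have q2 : quadIndex 2 = 2 := rfl
    have q3 : quadIndex 3 = 2 := rfl
    have q4 : quadIndex 4 = 1 := rfl
    have q5 : quadIndex 5 = 0 := rfl
    have t0 : ∀ l, triSides l 0 = exp ((l 0 + l 5) / 2) := fun l => by simp [triSides]
    have t1 : ∀ l, triSides l 1 = exp ((l 1 + l 4) / 2) := fun l => by simp [triSides]
    have t2 : ∀ l, triSides l 2 = exp ((l 2 + l 3) / 2) := fun l => by simp [triSides]
    have a1 : (0 : Fin 3) + 1 = 1 := rfl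
    have a2 : (0 : Fin 3) + 2 = 2 := rfl
    have a3 : (1 : Fin 3) + 1 = 2 := rfl
    have a4 : (1 : Fin 3) + 2 = 0 := rfl
    have a5 : (2 : Fin 3) + 1 = 0 := rfl
    have a6 : (2 : Fin 3) + 2 = 1 := rfl
    simp only [Fin.sum_univ_six, dihedral_eq, q0, q1, q2, q3, q4, q5, a1, a2, a3, a4, a5, a6,
      t0, t1, t2, pairQ]
    ring
  rw [h2]
  linarith

lemma continuous_dihedral (p : Fin 6) : Continuous fun l => dihedral l p := by
  simp only [dihedral_eq]
  have h : ∀ k, ∃ f : (Fin 6 → ℝ) → ℝ, Continuous f ∧ ∀ l, triSides l k = exp (f l) := by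
    intro k
    unfold triSides
    split_ifs
    · exact ⟨fun l => (l 0 + l 5) / 2, by fun_prop, fun _ => rfl⟩
    · exact ⟨fun l => (l 1 + l 4) / 2, by fun_prop, fun _ => rfl⟩
    · exact ⟨fun l => (l 2 + l 3) / 2, by fun_prop, fun _ => rfl⟩
  choose f hf hf' using h
  simp only [hf']
  exact continuous_ang_exp (hf _) (hf _) (hf _)

end Angles

lemma continuous_Ric [Fintype T] [DecidableEq E] (glue : T → Fin 6 → E) :
    Continuous (Ric glue) := by
  refine continuous_pi fun e => ?_
  unfold Ric
  refine continuous_const.sub (continuous_finsetSum _ fun σ _ => continuous_finsetSum _ fun p _ => ?_)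
  split_ifs
  · refine (continuous_dihedral p).comp ?_
    unfold pullback
    fun_prop
  · exact continuous_const

lemma norm_Ric_le [Fintype T] [Fintype E] [DecidableEq E] (glue : T → Fin 6 → E) (l : E → ℝ) :
    ‖Ric glue l‖ ≤ 2 * π + ∑ _σ : T, ∑ _p : Fin 6, π := by
  have hs : (0:ℝ) ≤ ∑ _σ : T, ∑ _p : Fin 6, π :=
    Finset.sum_nonneg fun _ _ => Finset.sum_nonneg fun _ _ => pi_pos.le
  refine (pi_norm_le_iff_of_nonneg (by have := pi_pos; linarith)).2 fun e => ?_
  unfold Ric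
  refine (norm_sub_le _ _).trans (add_le_add ?_ ?_)
  · rw [Real.norm_of_nonneg (by have := pi_pos; linarith)]
  · refine (norm_sum_le _ _).trans (Finset.sum_le_sum fun σ _ => ?_)
    refine (norm_sum_le _ _).trans (Finset.sum_le_sum fun p _ => ?_)
    split_ifs
    · rw [dihedral_eq, Real.norm_of_nonneg (ang_nonneg _ _ _)]
      exact ang_le_pi _ _ _
    · simpa using pi_pos.le

lemma Ric_mono [Fintype T] [Fintype E] [DecidableEq E] (glue : T → Fin 6 → E) (x y : E → ℝ) :
    ∑ e, (Ric glue x e - Ric glue y e) * (x e - y e) ≤ 0 := by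
  have h1 : ∑ e, (Ric glue x e - Ric glue y e) * (x e - y e) =
      -∑ σ : T, ∑ p : Fin 6, (dihedral (pullback glue x σ) p - dihedral (pullback glue y σ) p)
        * (pullback glue x σ p - pullback glue y σ p) := by
    have h2 : ∀ e, (Ric glue x e - Ric glue y e) * (x e - y e) =
        -∑ σ : T, ∑ p : Fin 6, if glue σ p = e then
          (dihedral (pullback glue x σ) p - dihedral (pullback glue y σ) p) * (x e - y e)
          else 0 := by
      intro e
      unfold Ric
      rw [sub_sub_sub_cancel_left, ← Finset.sum_sub_distrib, Finset.sum_mul,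
        ← Finset.sum_neg_distrib]
      refine Finset.sum_congr rfl fun σ _ => ?_
      rw [← Finset.sum_sub_distrib, Finset.sum_mul, ← Finset.sum_neg_distrib]
      refine Finset.sum_congr rfl fun p _ => ?_
      split_ifs <;> ring
    simp only [h2]
    rw [Finset.sum_neg_distrib, Finset.sum_comm]
    congr 1
    refine Finset.sum_congr rfl fun σ _ => ?_
    rw [Finset.sum_comm]
    refine Finset.sum_congr rfl fun p _ => ?_
    simp [pullback]
  rw [h1]
  exact neg_nonpos.2 (Finset.sum_nonneg fun σ _ => dihedral_mono _ _)

/-- long-time existence and uniqueness of the extended combinatorial Ricci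
flow `l'(t) = K̃(l(t))`, for any initial generalized decorated metric `l₀ ∈ ℝ^E`. -/
theorem extended_ricci_flow_global_existence_uniqueness
    [Fintype T] [Fintype E] [DecidableEq E] [Nonempty T]
    (glue : T → Fin 6 → E) (l₀ : E → ℝ) :
    ∃ l : ℝ → E → ℝ,
      (l 0 = l₀ ∧ ∀ t : ℝ, 0 ≤ t → HasDerivAt l (Ric glue (l t)) t) ∧
      ∀ l' : ℝ → E → ℝ,
        (l' 0 = l₀ ∧ ∀ t : ℝ, 0 ≤ t → HasDerivAt l' (Ric glue (l' t)) t) →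
        ∀ t : ℝ, 0 ≤ t → l t = l' t := by
  exact ode_global (Ric glue) (continuous_Ric glue) _ (Ric_mono glue) (norm_Ric_le glue) l₀
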